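/- Let F be a free group of finite rank n, let μ ∈ F, and suppose the quotient F / N⟨μ⟩ of F by the normal closure of μ is a free group of rank n − 1. Then μ is a primitive element of F. -/

import Mathlib

/-!
A free group of rank `n` maps onto a free group of smaller rank only by killing a primitive
element: present the images of the generators by loops in a finite labelled graph, consisting of a
finite subtree of the Cayley tree and one additional edge for each generator. By surjectivity and
the count of ranks two edges can be folded as long as no generator is killed (otherwise the graph
would extend to a finite covering of the rose, so it would have a single vertex and too many loops),
and every fold is realised by a Nielsen automorphism while making the tree smaller.

Hence the normal closure of `μ` contains a primitive element `x`, and Magnus' conjugacy theorem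
shows that `μ` is conjugate to `x` or `x⁻¹`. Magnus' theorem in turn rests on the Freiheitssatz,
proved by Magnus' rewriting: the kernel of an exponent-sum homomorphism is free on the conjugates
`t ^ i * x * t ^ (-i)`, the relators become the translates of a shorter word, and these form a
staggered family, whose quotient is built from amalgamated products.
-/

namespace OneRelator

open FreeGroup (of)
open Subgroup (normalClosure)

universe u

section FreeFactor

variable {X : Type u} {G : Type*} [Group G] {A B : Set X} {x : X} {r s w : FreeGroup X}

/-- The free factor of `FreeGroup X` generated by the letters in `A`. -/
def freeFactor (A : Set X) : Subgroup (FreeGroup X) := Subgroup.closure (of '' A)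

theorem of_mem_freeFactor (hx : x ∈ A) : of x ∈ freeFactor A :=
  Subgroup.subset_closure ⟨x, hx, rfl⟩

theorem freeFactor_mono (h : A ⊆ B) : freeFactor A ≤ freeFactor B :=
  Subgroup.closure_mono (Set.image_mono h)

theorem map_mem_of_mem_freeFactor (f : FreeGroup X →* G) {K : Subgroup G}
    (h : ∀ x ∈ A, f (of x) ∈ K) (hw : w ∈ freeFactor A) : f w ∈ K :=
  have hA : freeFactor A ≤ K.comap f := (Subgroup.closure_le _).2 (Set.forall_mem_image.2 h)
  hA hw

theorem eqOn_freeFactor {f g : FreeGroup X →* G} (h : ∀ x ∈ A, f (of x) = g (of x)) :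
    Set.EqOn f g (freeFactor A) :=
  MonoidHom.eqOn_closure <| Set.forall_mem_image.2 h

theorem freeFactor_univ : freeFactor (Set.univ : Set X) = ⊤ := by
  rw [freeFactor, Set.image_univ, FreeGroup.closure_range_of]

theorem mk_mem_freeFactor {L : List (X × Bool)} (h : ∀ p ∈ L, p.1 ∈ A) :
    FreeGroup.mk L ∈ freeFactor A := by
  rw [← FreeGroup.lift_of_apply (FreeGroup.mk L), FreeGroup.lift_mk]
  refine Subgroup.list_prod_mem _ (List.forall_mem_map.2 fun p hp => ?_)
  have hp := of_mem_freeFactor (h p hp)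
  cases p.2
  exacts [inv_mem hp, hp]

open Classical in
/-- The retraction of a free group onto a free factor, killing the letters outside `A`. -/
noncomputable def retraction (A : Set X) : FreeGroup X →* FreeGroup X :=
  FreeGroup.lift fun x => if x ∈ A then of x else 1

theorem retraction_mem_inter (A : Set X) (hw : w ∈ freeFactor B) :
    retraction A w ∈ freeFactor (A ∩ B) := by
  refine map_mem_of_mem_freeFactor _ (fun x hx => ?_) hw
  rw [retraction, FreeGroup.lift_apply_of]
  split_ifs with h
  exacts [of_mem_freeFactor ⟨h, hx⟩, one_mem _]

theorem retraction_of_mem (hw : w ∈ freeFactor A) : retraction A w = w := by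
  have h : Set.EqOn (retraction A) (MonoidHom.id (FreeGroup X)) (freeFactor A) :=
    eqOn_freeFactor fun x hx => by simp [retraction, hx]
  exact h hw

theorem retraction_of_notMem (hx : x ∉ A) : retraction A (of x) = 1 := by
  rw [retraction, FreeGroup.lift_apply_of, if_neg hx]

end FreeFactor

section EssentialLetters

variable {X : Type u} {A B : Set X} {x : X} {r s : FreeGroup X}

/-- `r` is conjugate into the free factor generated by the letters in `A`. -/
def ConjInto (r : FreeGroup X) (A : Set X) : Prop := ∃ v ∈ freeFactor A, IsConj r v

/-- The letters that no conjugate of `r` avoids, i.e. those of the cyclically reduced conjugates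
of `r`. -/
def essentialLetters (r : FreeGroup X) : Set X := {x | ¬ ConjInto r {x}ᶜ}

theorem ConjInto.mono (h : ConjInto r A) (hAB : A ⊆ B) : ConjInto r B :=
  h.imp fun _ hv => ⟨freeFactor_mono hAB hv.1, hv.2⟩

theorem ConjInto.inter (hA : ConjInto r A) (hB : ConjInto r B) : ConjInto r (A ∩ B) := by
  obtain ⟨a, ha, hra⟩ := hA
  obtain ⟨b, hb, hrb⟩ := hB
  refine ⟨retraction A b, retraction_mem_inter A hb, hra.trans ?_⟩
  simpa only [retraction_of_mem ha] using (retraction A).map_isConj (hra.symm.trans hrb)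

theorem conjInto_congr (h : IsConj r s) : ConjInto r A ↔ ConjInto s A :=
  ⟨fun ⟨v, hv, hr⟩ => ⟨v, hv, h.symm.trans hr⟩, fun ⟨v, hv, hs⟩ => ⟨v, hv, h.trans hs⟩⟩

theorem ConjInto.map {Y : Type*} {C : Set Y} (h : ConjInto r A) (f : FreeGroup X →* FreeGroup Y)
    (hf : ∀ x ∈ A, f (of x) ∈ freeFactor C) : ConjInto (f r) C :=
  let ⟨v, hv, hrv⟩ := h
  ⟨f v, map_mem_of_mem_freeFactor f hf hv, f.map_isConj hrv⟩

theorem ConjInto.map_eq_one {G : Type*} [Group G] (h : ConjInto r A) (f : FreeGroup X →* G)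
    (hf : ∀ x ∈ A, f (of x) = 1) : f r = 1 := by
  obtain ⟨v, hv, hrv⟩ := h
  have hv1 : f v ∈ (⊥ : Subgroup G) := map_mem_of_mem_freeFactor f hf hv
  exact isConj_one_left.1 (Subgroup.mem_bot.1 hv1 ▸ f.map_isConj hrv)

theorem conjInto_of_mem (hr : r ∈ freeFactor A) : ConjInto r A := ⟨r, hr, IsConj.refl r⟩

theorem conjInto_compl_of_finite {t : Set X} (ht : t.Finite) (h : ∀ z ∈ t, ConjInto r {z}ᶜ) :
    ConjInto r tᶜ := by
  induction t, ht using Set.Finite.induction_on with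
  | empty => exact conjInto_of_mem (by simp [freeFactor_univ])
  | @insert a t _ _ ih =>
    rw [Set.insert_eq, Set.compl_union]
    exact (h a (Set.mem_insert a t)).inter (ih fun z hz => h z (Set.mem_insert_of_mem a hz))

theorem exists_finite_mem_freeFactor (r : FreeGroup X) :
    ∃ t : Set X, t.Finite ∧ r ∈ freeFactor t := by
  induction r using Quot.inductionOn with | h L => ?_
  exact ⟨_, (L.map Prod.fst).finite_toSet, mk_mem_freeFactor fun p => List.mem_map_of_mem⟩

theorem conjInto_iff : ConjInto r A ↔ essentialLetters r ⊆ A := by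
  refine ⟨fun h x hx => ?_, fun h => ?_⟩
  · by_contra hxA
    exact hx (h.mono (Set.subset_compl_singleton_iff.2 hxA))
  · obtain ⟨t, ht, hr⟩ := exists_finite_mem_freeFactor r
    have htA : ConjInto r (t \ A)ᶜ :=
      conjInto_compl_of_finite ht.sdiff fun z hz => not_not.1 fun hz' => hz.2 (h hz')
    refine ((conjInto_of_mem hr).inter htA).mono fun z hz => ?_
    by_contra hzA
    exact hz.2 ⟨hz.1, hzA⟩

theorem essentialLetters_subset (hr : r ∈ freeFactor A) : essentialLetters r ⊆ A :=
  conjInto_iff.1 (conjInto_of_mem hr)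

theorem finite_essentialLetters (r : FreeGroup X) : (essentialLetters r).Finite :=
  let ⟨_, ht, hr⟩ := exists_finite_mem_freeFactor r
  ht.subset (essentialLetters_subset hr)

theorem exists_mem_of_mem_essentialLetters {L : List (X × Bool)}
    (hx : x ∈ essentialLetters (FreeGroup.mk L)) : ∃ p ∈ L, p.1 = x := by
  by_contra! h
  exact hx (conjInto_of_mem (mk_mem_freeFactor h))

end EssentialLetters

section NormalClosure

variable {G : Type*} [Group G] {ι : Type*}

theorem normalClosure_range_congr {r s : ι → G} (h : ∀ i, IsConj (r i) (s i)) :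
    normalClosure (Set.range r) = normalClosure (Set.range s) := by
  have hrs : Group.conjugatesOfSet (Set.range r) = Group.conjugatesOfSet (Set.range s) := by
    simp only [Group.conjugatesOfSet, Set.biUnion_range, (h _).conjugatesOf_eq]
  rw [normalClosure, normalClosure, hrs]

theorem normalClosure_singleton_congr {a b : G} (h : IsConj a b) :
    normalClosure {a} = normalClosure {b} := by
  simpa only [Set.range_const] using normalClosure_range_congr fun _ : Unit => h

theorem exists_finset_mem_normalClosure_image (r : ι → G) {w : G}
    (hw : w ∈ normalClosure (Set.range r)) :
    ∃ S : Finset ι, w ∈ normalClosure (r '' S) := by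
  classical
  induction hw using Subgroup.closure_induction with
  | mem v hv =>
    obtain ⟨_, ⟨i, rfl⟩, hv⟩ := Group.mem_conjugatesOfSet_iff.1 hv
    exact ⟨{i}, Subgroup.subset_closure (Group.mem_conjugatesOfSet_iff.2 ⟨r i, by simp, hv⟩)⟩
  | one => exact ⟨∅, one_mem _⟩
  | mul a b _ _ ha hb =>
    obtain ⟨S, hS⟩ := ha
    obtain ⟨T, hT⟩ := hb
    refine ⟨S ∪ T, mul_mem (Subgroup.normalClosure_mono (Set.image_mono ?_) hS)
      (Subgroup.normalClosure_mono (Set.image_mono ?_) hT)⟩ <;> simp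
  | inv a _ ha => exact ha.imp fun _ => inv_mem

end NormalClosure

section Amalgam

variable {X : Type u} {w : FreeGroup X}

theorem mem_normalClosure_of_mem_iUnion {ι : Type*} {A : ι → Set X} {C : Set X}
    (hAC : Pairwise fun i j => A i ∩ A j ⊆ C) {R : ι → Set (FreeGroup X)}
    (hR : ∀ i, R i ⊆ freeFactor (A i))
    (hCR : ∀ i, Disjoint (freeFactor C) (normalClosure (R i))) {i : ι}
    (hw : w ∈ freeFactor (A i)) (hwR : w ∈ normalClosure (⋃ i, R i)) :
    w ∈ normalClosure (R i) := by
  classical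
  let φ : ∀ i, freeFactor C →* FreeGroup X ⧸ normalClosure (R i) := fun _ =>
    (QuotientGroup.mk' _).comp (Subgroup.subtype _)
  have hφ : ∀ i, Function.Injective (φ i) := fun i => by
    refine (injective_iff_map_eq_one _).2 fun a ha => Subtype.ext ?_
    exact Subgroup.disjoint_def.1 (hCR i) a.2 ((QuotientGroup.eq_one_iff _).1 ha)
  let q : ι → FreeGroup X →* Monoid.PushoutI φ := fun i =>
    (Monoid.PushoutI.of i).comp (QuotientGroup.mk' _)
  have q_eq_base : ∀ i x (hx : x ∈ C),
      q i (of x) = Monoid.PushoutI.base φ ⟨of x, of_mem_freeFactor hx⟩ := fun i x hx =>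
    Monoid.PushoutI.of_apply_eq_base φ i ⟨of x, of_mem_freeFactor hx⟩
  let ψ : FreeGroup X →* Monoid.PushoutI φ :=
    FreeGroup.lift fun x => if h : ∃ i, x ∈ A i then q h.choose (of x) else 1
  have hψ : ∀ i, Set.EqOn ψ (q i) (freeFactor (A i)) := fun i => eqOn_freeFactor fun x hx => by
    have h : ∃ i, x ∈ A i := ⟨i, hx⟩
    rw [FreeGroup.lift_apply_of, dif_pos h]
    by_cases hi : h.choose = i
    · rw [hi]
    · have hxC : x ∈ C := hAC hi ⟨h.choose_spec, hx⟩
      rw [q_eq_base _ x hxC, q_eq_base _ x hxC]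
  have hker : normalClosure (⋃ i, R i) ≤ ψ.ker := by
    refine Subgroup.normalClosure_le_normal (Set.iUnion_subset fun i v hv => ?_)
    have hv1 : QuotientGroup.mk' (normalClosure (R i)) v = 1 :=
      (QuotientGroup.eq_one_iff v).2 (Subgroup.subset_normalClosure hv)
    rw [SetLike.mem_coe, MonoidHom.mem_ker, hψ i (hR i hv), MonoidHom.comp_apply, hv1, map_one]
  have hqw : q i w = 1 := (hψ i hw).symm.trans (hker hwR)
  exact (QuotientGroup.eq_one_iff w).1 <|
    Monoid.PushoutI.of_injective hφ i (hqw.trans (map_one _).symm)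

theorem mem_normalClosure_of_mem_union {A B : Set X} {R S : Set (FreeGroup X)}
    (hR : R ⊆ freeFactor A) (hS : S ⊆ freeFactor B)
    (hAR : Disjoint (freeFactor (A ∩ B)) (normalClosure R))
    (hBS : Disjoint (freeFactor (A ∩ B)) (normalClosure S))
    (hw : w ∈ freeFactor A) (hwRS : w ∈ normalClosure (R ∪ S)) : w ∈ normalClosure R := by
  refine mem_normalClosure_of_mem_iUnion (A := fun b => cond b A B) (C := A ∩ B)
    (R := fun b => cond b R S) (i := true) ?_ (Bool.forall_bool.2 ⟨hS, hR⟩)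
    (Bool.forall_bool.2 ⟨hBS, hAR⟩) hw ?_
  · rintro (_ | _) (_ | _) hij
    exacts [absurd rfl hij, (Set.inter_comm B A).subset, subset_rfl, absurd rfl hij]
  · rwa [Set.union_eq_iUnion] at hwRS

end Amalgam

section Staggered

open Set

variable {X : Type u} {ι Λ : Type*} {x : Λ → X} {I J : Set Λ}

/-- The set of letters that are listed by `x` only at positions in `I`. Letters that `x` does not
list at all belong to every window. -/
def window (x : Λ → X) (I : Set Λ) : Set X := {z | ∀ j, x j = z → j ∈ I}

theorem window_mono (h : I ⊆ J) : window x I ⊆ window x J := fun _ hz j hj => h (hz j hj)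

theorem window_subset_compl_singleton {j : Λ} (hj : j ∉ J) : window x J ⊆ {x j}ᶜ :=
  fun _ hz hzj => hj (hz j hzj.symm)

variable [LinearOrder ι] [LinearOrder Λ]

/-- A family of relators `r` is staggered along the letters `x` if the `i`-th relator only involves
letters at positions from `lo i` to `hi i`, both of which increase with `i`, and satisfies the
conclusion of the Freiheitssatz for the two extreme letters. -/
structure Staggered (x : Λ → X) (r : ι → FreeGroup X) (lo hi : ι → Λ) : Prop where
  strictMono_lo : StrictMono lo
  strictMono_hi : StrictMono hi
  lo_le_hi : lo ≤ hi
  mem_window : ∀ i, r i ∈ freeFactor (window x (Icc (lo i) (hi i)))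
  disjoint_lo : ∀ i, Disjoint (freeFactor {x (lo i)}ᶜ) (normalClosure {r i})
  disjoint_hi : ∀ i, Disjoint (freeFactor {x (hi i)}ᶜ) (normalClosure {r i})

variable {r : ι → FreeGroup X} {lo hi : ι → Λ} {w : FreeGroup X}

namespace Staggered

open OrderDual in
theorem dual (h : Staggered x r lo hi) :
    Staggered (x ∘ ofDual) (r ∘ ofDual) (toDual ∘ hi ∘ ofDual) (toDual ∘ lo ∘ ofDual) where
  strictMono_lo := h.strictMono_hi.dual
  strictMono_hi := h.strictMono_lo.dual
  lo_le_hi := fun i => h.lo_le_hi (ofDual i)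
  mem_window := fun i => freeFactor_mono (window_mono fun _ => And.symm) (h.mem_window (ofDual i))
  disjoint_lo := h.disjoint_hi
  disjoint_hi := h.disjoint_lo

/-- The relators below `c` and the relator `r c` present two groups amalgamated over the letters
before `hi c` and from `lo c` on. -/
theorem mem_of_insert_max (h : Staggered x r lo hi) {S : Set ι} {c : ι} (hSc : ∀ i ∈ S, i < c)
    (hS : Disjoint (freeFactor (window x (Ici (lo c)))) (normalClosure (r '' S)))
    (hw : w ∈ freeFactor (window x (Iio (hi c)))) (hwS : w ∈ normalClosure (r '' insert c S)) :
    w ∈ normalClosure (r '' S) := by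
  refine mem_normalClosure_of_mem_union (B := window x (Ici (lo c))) (S := {r c}) ?_ ?_
    (hS.mono_left (freeFactor_mono inter_subset_right)) ?_ hw
    (by rwa [image_insert_eq, insert_eq, union_comm] at hwS)
  · rintro _ ⟨i, hi, rfl⟩
    exact freeFactor_mono (window_mono fun j hj => hj.2.trans_lt (h.strictMono_hi (hSc i hi)))
      (h.mem_window i)
  · exact singleton_subset_iff.2
      (freeFactor_mono (window_mono fun j hj => hj.1) (h.mem_window c))
  · exact (h.disjoint_hi c).mono_left (freeFactor_mono
      (inter_subset_left.trans (window_subset_compl_singleton (lt_irrefl (hi c)))))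

theorem mem_of_insert_min (h : Staggered x r lo hi) {S : Set ι} {c : ι} (hSc : ∀ i ∈ S, c < i)
    (hS : Disjoint (freeFactor (window x (Iic (hi c)))) (normalClosure (r '' S)))
    (hw : w ∈ freeFactor (window x (Ioi (lo c)))) (hwS : w ∈ normalClosure (r '' insert c S)) :
    w ∈ normalClosure (r '' S) :=
  h.dual.mem_of_insert_max hSc hS hw hwS

theorem exists_subset_mem_normalClosure (h : Staggered x r lo hi) (S : Finset ι) (J : Set Λ)
    (hw : w ∈ freeFactor (window x J)) (hwS : w ∈ normalClosure (r '' S)) :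
    ∃ T ⊆ S, w ∈ normalClosure (r '' T) ∧
      ∀ i ∈ T, ¬ J ⊆ Iio (hi i) ∧ ¬ J ⊆ Ioi (lo i) := by
  induction S using Finset.strongInduction generalizing J w with | H S ih => ?_
  have disjoint_of_ssubset : ∀ T ⊂ S, ∀ J, (∀ i ∈ T, J ⊆ Iio (hi i) ∨ J ⊆ Ioi (lo i)) →
      Disjoint (freeFactor (window x J)) (normalClosure (r '' T)) := fun T hT J hJ => by
    refine Subgroup.disjoint_def.2 fun {v} hv hvT => ?_
    obtain ⟨U, hUT, hvU, hU⟩ := ih T hT J hv hvT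
    have hU0 : U = ∅ := Finset.eq_empty_of_forall_notMem fun i hi =>
      (hJ i (hUT hi)).elim (hU i hi).1 (hU i hi).2
    simpa [hU0] using hvU
  have of_erase : ∀ c ∈ S, w ∈ normalClosure (r '' S.erase c) → ∃ T ⊆ S,
      w ∈ normalClosure (r '' T) ∧ ∀ i ∈ T, ¬ J ⊆ Iio (hi i) ∧ ¬ J ⊆ Ioi (lo i) := fun c hc hwc =>
    (ih _ (Finset.erase_ssubset hc) J hw hwc).imp fun T hT => ⟨hT.1.trans (S.erase_subset c), hT.2⟩
  by_cases hSJ : ∀ i ∈ S, ¬ J ⊆ Iio (hi i) ∧ ¬ J ⊆ Ioi (lo i)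
  · exact ⟨S, subset_rfl, hwS, hSJ⟩
  push Not at hSJ
  obtain ⟨i, hiS, hiJ⟩ := hSJ
  have hS : S.Nonempty := ⟨i, hiS⟩
  by_cases hJ : J ⊆ Iio (hi i)
  · set c := S.max' hS
    have hc : c ∈ S := S.max'_mem hS
    have lt_c : ∀ k ∈ S.erase c, k < c := fun k hk => S.lt_max'_of_mem_erase_max' hS hk
    have hJc : J ⊆ Iio (hi c) :=
      hJ.trans (Iio_subset_Iio (h.strictMono_hi.monotone (S.le_max' i hiS)))
    refine of_erase c hc (h.mem_of_insert_max lt_c ?_ (freeFactor_mono (window_mono hJc) hw) ?_)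
    · exact disjoint_of_ssubset _ (Finset.erase_ssubset hc) _ fun k hk =>
        Or.inr (Ici_subset_Ioi.2 (h.strictMono_lo (lt_c k hk)))
    · rwa [← Finset.coe_insert, Finset.insert_erase hc]
  · set d := S.min' hS
    have hd : d ∈ S := S.min'_mem hS
    have d_lt : ∀ k ∈ S.erase d, d < k := fun k hk => S.min'_lt_of_mem_erase_min' hS hk
    have hJd : J ⊆ Ioi (lo d) :=
      (hiJ hJ).trans (Ioi_subset_Ioi (h.strictMono_lo.monotone (S.min'_le i hiS)))
    refine of_erase d hd (h.mem_of_insert_min d_lt ?_ (freeFactor_mono (window_mono hJd) hw) ?_)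
    · exact disjoint_of_ssubset _ (Finset.erase_ssubset hd) _ fun k hk =>
        Or.inl (Iic_subset_Iio.2 (h.strictMono_hi (d_lt k hk)))
    · rwa [← Finset.coe_insert, Finset.insert_erase hd]

theorem exists_mem_normalClosure_singleton [Nonempty ι] (h : Staggered x r lo hi) {j : Λ}
    (hw : w ∈ freeFactor (window x {j})) (hwr : w ∈ normalClosure (range r)) :
    ∃ i, w ∈ normalClosure {r i} := by
  obtain ⟨S, hS⟩ := exists_finset_mem_normalClosure_image r hwr
  obtain ⟨T, -, hwT, hT⟩ := h.exists_subset_mem_normalClosure S {j} hw hS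
  simp only [singleton_subset_iff, mem_Iio, mem_Ioi, not_lt] at hT
  have hTsub : (T : Set ι).Subsingleton := fun a ha b hb => by
    have le_of_mem : ∀ a ∈ T, ∀ b ∈ T, a ≤ b := fun a ha b hb =>
      h.strictMono_hi.le_iff_le.1 ((hT a ha).1.trans ((hT b hb).2.trans (h.lo_le_hi b)))
    exact le_antisymm (le_of_mem a ha b hb) (le_of_mem b hb a ha)
  obtain hT0 | ⟨i, hi⟩ := hTsub.eq_empty_or_singleton
  · refine ⟨Classical.arbitrary ι, ?_⟩
    rw [hT0, image_empty, Subgroup.normalClosure_empty, Subgroup.mem_bot] at hwT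
    exact hwT ▸ one_mem _
  · exact ⟨i, by rwa [hi, image_singleton] at hwT⟩

end Staggered

end Staggered

section AdjoinRoot

theorem exists_injective_zpow_eq {G : Type u} [Group G] {g : G} (hg : ¬ IsOfFinOrder g) {a : ℤ}
    (ha : a ≠ 0) : ∃ (H : Type u) (_ : Group H) (f : G →* H) (s : H),
      Function.Injective f ∧ s ^ a = f g := by
  let φ : Bool → Multiplicative ℤ →* G := fun b => zpowersHom G (g ^ cond b 1 a)
  have hφ : ∀ b, Function.Injective (φ b) := fun b k l hkl => by
    have hb : cond b 1 a ≠ 0 := by cases b <;> simp [ha]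
    refine Multiplicative.toAdd.injective (mul_left_cancel₀ hb ?_)
    refine injective_zpow_iff_not_isOfFinOrder.2 hg ?_
    simp only [zpow_mul]
    exact hkl
  refine ⟨Monoid.PushoutI φ, inferInstance, Monoid.PushoutI.of (φ := φ) true,
    Monoid.PushoutI.of (φ := φ) false g, Monoid.PushoutI.of_injective hφ true, ?_⟩
  have h : ∀ b, Monoid.PushoutI.of (φ := φ) b (g ^ cond b 1 a) =
      Monoid.PushoutI.base φ (Multiplicative.ofAdd 1) := fun b => by
    rw [← Monoid.PushoutI.of_apply_eq_base φ b, zpowersHom_apply, toAdd_ofAdd, zpow_one]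
  simpa only [cond_true, cond_false, map_zpow, zpow_one] using (h false).trans (h true).symm

end AdjoinRoot

section Shift

variable {X : Type u} {r w : FreeGroup (X × ℤ)} {A : Set (X × ℤ)}

/-- The automorphism of `FreeGroup (X × ℤ)` that translates the second index of every letter
by `k`. -/
def shift (k : ℤ) : MulAut (FreeGroup (X × ℤ)) :=
  FreeGroup.freeGroupCongr ((Equiv.refl X).prodCongr (Equiv.addRight k))

@[simp]
theorem shift_of (k : ℤ) (p : X × ℤ) : shift k (of p) = of (p.1, p.2 + k) := rfl

theorem shift_zero : shift 0 = (1 : MulAut (FreeGroup (X × ℤ))) :=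
  MulEquiv.toMonoidHom_injective <| FreeGroup.ext_hom _ _ fun p => by simp

theorem shift_add (k l : ℤ) : shift (k + l) = (shift k * shift l : MulAut (FreeGroup (X × ℤ))) :=
  MulEquiv.toMonoidHom_injective <| FreeGroup.ext_hom _ _ fun p => by
    simp [add_assoc, add_comm k l]

theorem shift_mem_freeFactor (k : ℤ) (hw : w ∈ freeFactor {p | (p.1, p.2 + k) ∈ A}) :
    shift k w ∈ freeFactor A :=
  map_mem_of_mem_freeFactor (shift k).toMonoidHom (fun _ hp => of_mem_freeFactor hp) hw

theorem conjInto_shift {k : ℤ} : ConjInto (shift k r) A ↔ ConjInto r {p | (p.1, p.2 + k) ∈ A} := by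
  refine ⟨fun h => ?_, fun h => h.map (shift k).toMonoidHom fun p hp => of_mem_freeFactor hp⟩
  have h' : shift (-k) (shift k r) = r := by
    rw [← MulAut.mul_apply, ← shift_add, neg_add_cancel, shift_zero, MulAut.one_apply]
  rw [← h']
  exact h.map (shift (-k)).toMonoidHom fun p hp => of_mem_freeFactor (by simpa using hp)

theorem mem_essentialLetters_shift {k : ℤ} {y : X} {j : ℤ} :
    (y, j + k) ∈ essentialLetters (shift k r) ↔ (y, j) ∈ essentialLetters r := by
  have h : {p : X × ℤ | (p.1, p.2 + k) ∈ ({(y, j + k)}ᶜ : Set _)} = {(y, j)}ᶜ := by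
    ext ⟨z, i⟩
    simp
  exact not_congr (by rw [conjInto_shift, h])

theorem norm_shift_le [DecidableEq X] (k : ℤ) (w : FreeGroup (X × ℤ)) :
    (shift k w).norm ≤ w.norm := by
  conv_lhs => rw [← w.mk_toWord]
  refine FreeGroup.norm_mk_le.trans_eq (List.length_map _)

/-- The normal closure of all shifts of `r`. -/
def shiftClosure (r : FreeGroup (X × ℤ)) : Subgroup (FreeGroup (X × ℤ)) :=
  normalClosure (Set.range fun k => shift k r)

instance : (shiftClosure r).Normal := Subgroup.normalClosure_normal

theorem shift_mem_shiftClosure (k : ℤ) (hw : w ∈ shiftClosure r) :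
    shift k w ∈ shiftClosure r := by
  have hle : shiftClosure r ≤ (shiftClosure r).comap (shift k).toMonoidHom := by
    refine Subgroup.normalClosure_le_normal (Set.range_subset_iff.2 fun l => ?_)
    exact Subgroup.subset_normalClosure ⟨k + l, DFunLike.congr_fun (shift_add k l) r⟩
  exact hle hw

theorem self_mem_shiftClosure (r : FreeGroup (X × ℤ)) : r ∈ shiftClosure r :=
  Subgroup.subset_normalClosure ⟨0, DFunLike.congr_fun shift_zero r⟩

end Shift

section MagnusRewriting

variable (X : Type u)

/-- The action of `ℤ` on `FreeGroup (X × ℤ)` by translation of the second index. -/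
def shiftHom : Multiplicative ℤ →* MulAut (FreeGroup (X × ℤ)) where
  toFun k := shift k.toAdd
  map_one' := shift_zero
  map_mul' k l := shift_add k.toAdd l.toAdd

theorem shiftHom_apply (k : Multiplicative ℤ) : shiftHom X k = shift k.toAdd := rfl

/-- The target of Magnus rewriting: a free group on `ℤ` copies of each letter, extended by the
stable letter that translates them. -/
abbrev ShiftProduct : Type u := FreeGroup (X × ℤ) ⋊[shiftHom X] Multiplicative ℤ

variable {X} {H : Type*} [Group H] {t : X} {e : X → ℤ} {r w : FreeGroup X}

namespace ShiftProduct

instance normal_map_inl_shiftClosure (r : FreeGroup (X × ℤ)) :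
    ((shiftClosure r).map (SemidirectProduct.inl : _ →* ShiftProduct X)).Normal where
  conj_mem := by
    rintro _ ⟨v, hv, rfl⟩ g
    refine ⟨g.left * shift g.right.toAdd v * g.left⁻¹,
      Subgroup.Normal.conj_mem inferInstance _ (shift_mem_shiftClosure _ hv) _, ?_⟩
    conv_rhs => rw [← SemidirectProduct.inl_left_mul_inr_right g]
    simp only [map_mul, map_inv, ← shiftHom_apply, SemidirectProduct.inl_aut, mul_inv_rev,
      mul_assoc]

/-- The homomorphism sending the letter `(x, k)` to `s ^ k * b x * s ^ (-k)` and the stable letter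
to `s`. -/
def lift (s : H) (b : X → H) : ShiftProduct X →* H :=
  SemidirectProduct.lift (FreeGroup.lift fun p => s ^ p.2 * b p.1 * (s ^ p.2)⁻¹)
    (zpowersHom H s) fun k => FreeGroup.ext_hom _ _ fun p => by
      have hconj : zpowersHom H s k = s ^ k.toAdd := rfl
      simp only [MonoidHom.comp_apply, MulEquiv.coe_toMonoidHom, shiftHom_apply, shift_of,
        FreeGroup.lift_apply_of, MulAut.conj_apply, hconj, add_comm _ k.toAdd, zpow_add]
      group

@[simp]
theorem lift_inl_of (s : H) (b : X → H) (p : X × ℤ) :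
    lift s b (SemidirectProduct.inl (of p)) = s ^ p.2 * b p.1 * (s ^ p.2)⁻¹ := by
  simp [lift]

@[simp]
theorem lift_inr (s : H) (b : X → H) (k : Multiplicative ℤ) :
    lift s b (SemidirectProduct.inr k) = s ^ k.toAdd := by
  simp [lift]

theorem lift_inl_shift (s : H) (b : X → H) (k : ℤ) (v : FreeGroup (X × ℤ)) :
    lift s b (SemidirectProduct.inl (shift k v)) =
      s ^ k * lift s b (SemidirectProduct.inl v) * (s ^ k)⁻¹ := by
  have h := congrArg (lift s b)
    (SemidirectProduct.inl_aut (φ := shiftHom X) (Multiplicative.ofAdd k) v)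
  simpa only [shiftHom_apply, map_mul, map_inv, lift_inr, toAdd_ofAdd] using h

/-- The subgroup of the elements whose component in `FreeGroup (X × ℤ)` only involves copies of the
letters in `A`. -/
def leftMem (A : Set X) : Subgroup (ShiftProduct X) where
  carrier := {g | g.left ∈ freeFactor {p | p.1 ∈ A}}
  one_mem' := by
    rw [Set.mem_ofPred_eq, SemidirectProduct.one_left]
    exact one_mem _
  mul_mem' := fun {g h} hg hh => by
    rw [Set.mem_ofPred_eq, SemidirectProduct.mul_left]
    exact mul_mem hg (shift_mem_freeFactor (A := {p | p.1 ∈ A}) g.right.toAdd hh)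
  inv_mem' := fun {g} hg => by
    rw [Set.mem_ofPred_eq, SemidirectProduct.inv_left]
    exact shift_mem_freeFactor (A := {p | p.1 ∈ A}) (g.right⁻¹).toAdd (inv_mem hg)

theorem mem_leftMem {A : Set X} {g : ShiftProduct X} :
    g ∈ leftMem A ↔ g.left ∈ freeFactor {p | p.1 ∈ A} := Iff.rfl

end ShiftProduct

/-- The homomorphism to `ℤ` giving the letter `x` weight `e x`; for `e = Pi.single x 1` it is the
exponent sum of `x`. -/
def exponent (e : X → ℤ) : FreeGroup X →* Multiplicative ℤ :=
  FreeGroup.lift fun x => Multiplicative.ofAdd (e x)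

theorem exponent_smul_add_smul (a b : ℤ) (e f : X → ℤ) (w : FreeGroup X) :
    exponent (a • e + b • f) w = exponent e w ^ a * exponent f w ^ b := by
  have h : exponent (a • e + b • f) =
      (zpowGroupHom a).comp (exponent e) * (zpowGroupHom b).comp (exponent f) :=
    FreeGroup.ext_hom _ _ fun x => by
      simp only [exponent, FreeGroup.lift_apply_of, MonoidHom.mul_apply, MonoidHom.comp_apply,
        zpowGroupHom_apply, Pi.add_apply, Pi.smul_apply, ofAdd_add, ofAdd_zsmul]
  exact DFunLike.congr_fun h w

open Classical in
/-- Magnus rewriting with respect to the letter `t` and the weights `e`: the letter `t` becomes the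
power `e t` of the stable letter, and every other letter `x` becomes `(x, 0)` times the power `e x`
of the stable letter. -/
noncomputable def magnusHom (t : X) (e : X → ℤ) : FreeGroup X →* ShiftProduct X :=
  FreeGroup.lift fun x => ⟨if x = t then 1 else of (x, 0), Multiplicative.ofAdd (e x)⟩

theorem magnusHom_of (t : X) (e : X → ℤ) (x : X) [Decidable (x = t)] :
    magnusHom t e (of x) =
      ⟨if x = t then 1 else of (x, 0), Multiplicative.ofAdd (e x)⟩ := by
  rw [magnusHom, FreeGroup.lift_apply_of]
  congr

theorem magnusHom_right (t : X) (e : X → ℤ) (w : FreeGroup X) :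
    (magnusHom t e w).right = exponent e w := by
  have h : SemidirectProduct.rightHom.comp (magnusHom t e) = exponent e :=
    FreeGroup.ext_hom _ _ fun x => by
      classical
      rw [MonoidHom.comp_apply, magnusHom_of, exponent, FreeGroup.lift_apply_of]
      rfl
  exact DFunLike.congr_fun h w

theorem lift_magnusHom_of (s : H) (b : X → H) (x : X) [Decidable (x = t)] :
    ShiftProduct.lift s b (magnusHom t e (of x)) = (if x = t then 1 else b x) * s ^ e x := by
  rw [magnusHom_of, SemidirectProduct.mk_eq_inl_mul_inr, map_mul, ShiftProduct.lift_inr]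
  split_ifs <;> simp

theorem inl_magnusHom_left (hw : exponent e w = 1) :
    SemidirectProduct.inl (magnusHom t e w).left = magnusHom t e w :=
  SemidirectProduct.ext rfl (by rw [magnusHom_right, hw]; rfl)

theorem magnusHom_injective (het : e t ≠ 0) : Function.Injective (magnusHom t e) := by
  classical
  have ht : ¬ IsOfFinOrder (of t) :=
    not_isOfFinOrder_of_isMulTorsionFree (FreeGroup.of_ne_one t)
  obtain ⟨H, _, f, s, hf, hs⟩ := exists_injective_zpow_eq ht het
  have h : (ShiftProduct.lift s fun x => f (of x) * (s ^ e x)⁻¹).comp (magnusHom t e) = f :=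
    FreeGroup.ext_hom _ _ fun x => by
      rw [MonoidHom.comp_apply, lift_magnusHom_of]
      split_ifs with hx
      · rw [hx, one_mul, hs]
      · rw [inv_mul_cancel_right]
  exact Function.Injective.of_comp (f := ShiftProduct.lift s _) (by rwa [← MonoidHom.coe_comp, h])

theorem lift_magnusHom_single [DecidableEq X] (t : X) (w : FreeGroup X) :
    ShiftProduct.lift (of t) of (magnusHom t (Pi.single t 1) w) = w := by
  have h : (ShiftProduct.lift (of t) of).comp (magnusHom t (Pi.single t 1)) = MonoidHom.id _ :=
    FreeGroup.ext_hom _ _ fun x => by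
      rw [MonoidHom.comp_apply, lift_magnusHom_of]
      split_ifs with hx <;> simp [hx]
  exact DFunLike.congr_fun h w

theorem magnusHom_left_mem_shiftClosure (hr : exponent e r = 1) (hw : w ∈ normalClosure {r}) :
    (magnusHom t e w).left ∈ shiftClosure (magnusHom t e r).left := by
  have hle : normalClosure {r} ≤ ((shiftClosure (magnusHom t e r).left).map
      SemidirectProduct.inl).comap (magnusHom t e) := by
    refine Subgroup.normalClosure_le_normal (Set.singleton_subset_iff.2 ?_)
    exact ⟨_, self_mem_shiftClosure _, inl_magnusHom_left hr⟩
  obtain ⟨v, hv, hvw⟩ := hle hw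
  rwa [← hvw, SemidirectProduct.left_inl]

theorem magnusHom_left_mem_freeFactor {A : Set X} (hw : w ∈ freeFactor A) :
    (magnusHom t e w).left ∈ freeFactor {p | p.1 ∈ A \ {t}} := by
  classical
  refine ShiftProduct.mem_leftMem.1 (map_mem_of_mem_freeFactor _ (fun x hx => ?_) hw)
  rw [ShiftProduct.mem_leftMem, magnusHom_of]
  split_ifs with hxt
  exacts [one_mem _, of_mem_freeFactor ⟨hx, hxt⟩]

theorem norm_magnusHom_left_singleton_le [DecidableEq X] (t : X) (e : X → ℤ) (p : X × Bool) :
    (magnusHom t e (FreeGroup.mk [p])).left.norm ≤ ([p].filter fun p => p.1 ≠ t).length := by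
  have hof : (magnusHom t e (of p.1)).left.norm ≤ ([p].filter fun p => p.1 ≠ t).length := by
    rw [magnusHom_of]
    split_ifs with h <;> simp [h]
  obtain ⟨x, _ | _⟩ := p
  · have hinv : FreeGroup.mk [(x, false)] = (of x)⁻¹ := rfl
    rw [hinv, map_inv, SemidirectProduct.inv_left]
    exact (norm_shift_le _ _).trans (FreeGroup.norm_inv_eq.trans_le hof)
  · exact hof

theorem norm_magnusHom_left_le [DecidableEq X] (t : X) (e : X → ℤ) (L : List (X × Bool)) :
    (magnusHom t e (FreeGroup.mk L)).left.norm ≤ (L.filter fun p => p.1 ≠ t).length := by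
  induction L with
  | nil => simp [← FreeGroup.one_eq_mk]
  | cons p L ih =>
    have hp : (magnusHom t e (FreeGroup.mk [p])).left.norm ≤
        ([p].filter fun p => p.1 ≠ t).length := norm_magnusHom_left_singleton_le t e p
    have hmk : FreeGroup.mk (p :: L) = FreeGroup.mk [p] * FreeGroup.mk L := rfl
    have hfilter := congrArg List.length (List.filter_append (p := fun p => p.1 ≠ t) [p] L)
    rw [List.singleton_append, List.length_append] at hfilter
    rw [hmk, map_mul, SemidirectProduct.mul_left, hfilter]
    exact (FreeGroup.norm_mul_le _ _).trans (add_le_add hp ((norm_shift_le _ _).trans ih))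

theorem norm_magnusHom_left_lt [DecidableEq X] (e : X → ℤ) (ht : t ∈ essentialLetters r) :
    (magnusHom t e r).left.norm < r.norm := by
  have hr := r.mk_toWord
  obtain ⟨p, hp, hpt⟩ := exists_mem_of_mem_essentialLetters (hr ▸ ht)
  calc (magnusHom t e r).left.norm
      ≤ (r.toWord.filter fun p => p.1 ≠ t).length := by
        simpa only [hr] using norm_magnusHom_left_le t e r.toWord
    _ < r.norm := List.length_filter_lt_length_iff_exists.2 ⟨p, hp, by simpa using hpt⟩

end MagnusRewriting

section Freiheitssatz

/-- The conclusion of the Freiheitssatz for a relator `r`: no nontrivial consequence of `r` can be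
written without an essential letter of `r`. -/
def Freiheit {X : Type*} (r : FreeGroup X) : Prop :=
  ∀ x ∈ essentialLetters r, Disjoint (freeFactor {x}ᶜ) (normalClosure {r})

variable {X : Type u} {r w : FreeGroup (X × ℤ)} {y : X}

theorem exists_mem_normalClosure_shift (hr : ∀ k, Freiheit (shift k r))
    (hy : ∃ j, (y, j) ∈ essentialLetters r)
    (hw : w ∈ freeFactor {p | p.1 = y → p.2 = 0}) (hwr : w ∈ shiftClosure r) :
    ∃ k, w ∈ normalClosure {shift k r} := by
  have hfin : {j | (y, j) ∈ essentialLetters r}.Finite :=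
    (finite_essentialLetters r).preimage (Prod.mk_right_injective y).injOn
  obtain ⟨m, hm, hm_le⟩ := Set.exists_min_image _ id hfin hy
  obtain ⟨M, hM, hM_ge⟩ := Set.exists_max_image _ id hfin hy
  obtain ⟨s, hs, hrs⟩ : ConjInto r (window (Prod.mk y) (Set.Icc m M)) :=
    conjInto_iff.2 fun z hz j hj => by
      subst hj
      exact ⟨hm_le j hz, hM_ge j hz⟩
  have isConj_shift : ∀ k, IsConj (shift k s) (shift k r) := fun k =>
    (shift k).toMonoidHom.map_isConj hrs.symm
  have disjoint_shift : ∀ k j, (y, j) ∈ essentialLetters r →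
      Disjoint (freeFactor {(y, j + k)}ᶜ) (normalClosure {shift k s}) := fun k j hj => by
    rw [normalClosure_singleton_congr (isConj_shift k)]
    exact hr k (y, j + k) (mem_essentialLetters_shift.2 hj)
  have mem_window : ∀ k, shift k s ∈
      freeFactor (window (Prod.mk y) (Set.Icc (m + k) (M + k))) := fun k => by
    refine shift_mem_freeFactor k (freeFactor_mono (fun p hp j hj => ?_) hs)
    obtain ⟨rfl, rfl⟩ := Prod.mk.inj hj
    obtain ⟨hmp, hpM⟩ := hp p.2 rfl
    exact ⟨by lia, by lia⟩
  have hstag : Staggered (Prod.mk y) (fun k => shift k s) (fun k => m + k) (fun k => M + k) :=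
    { strictMono_lo := fun k l => by simp
      strictMono_hi := fun k l => by simp
      lo_le_hi := fun k => Int.add_le_add_right (hm_le M hM) k
      mem_window := mem_window
      disjoint_lo := fun k => disjoint_shift k m hm
      disjoint_hi := fun k => disjoint_shift k M hM }
  rw [shiftClosure, ← normalClosure_range_congr isConj_shift] at hwr
  obtain ⟨k, hk⟩ := hstag.exists_mem_normalClosure_singleton (j := 0)
    (freeFactor_mono (fun p hp j hj => by subst hj; exact hp rfl) hw) hwr
  exact ⟨k, by rwa [← normalClosure_singleton_congr (isConj_shift k)]⟩

end Freiheitssatz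

section MagnusInduction

variable {X : Type u} {t x y : X} {e : X → ℤ} {r w : FreeGroup X}

theorem eq_one_of_freiheit_shift (het : e t ≠ 0) (hr : exponent e r = 1)
    (hF : ∀ k, Freiheit (shift k (magnusHom t e r).left))
    (hy : ∃ j, (y, j) ∈ essentialLetters (magnusHom t e r).left)
    (hw : (magnusHom t e w).left ∈ freeFactor {p | p.1 = y → p.2 = 0})
    (hwz : ∀ k, ∃ z ∈ essentialLetters (shift k (magnusHom t e r).left),
      (magnusHom t e w).left ∈ freeFactor {z}ᶜ)
    (hwr : w ∈ normalClosure {r}) : w = 1 := by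
  obtain ⟨k, hk⟩ := exists_mem_normalClosure_shift hF hy hw (magnusHom_left_mem_shiftClosure hr hwr)
  obtain ⟨z, hz, hwz⟩ := hwz k
  have hleft : (magnusHom t e w).left = 1 := Subgroup.disjoint_def.1 (hF k z hz) hwz hk
  have hker : normalClosure {r} ≤ (exponent e).ker :=
    Subgroup.normalClosure_le_normal (Set.singleton_subset_iff.2 hr)
  refine magnusHom_injective het ?_
  rw [← inl_magnusHom_left (hker hwr), hleft, map_one, map_one]

theorem ConjInto.disjoint_freeFactor (h : ConjInto r {x}) :
    Disjoint (freeFactor {x}ᶜ) (normalClosure {r}) := by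
  have hr : retraction {x}ᶜ r = 1 := h.map_eq_one _ fun z hz =>
    retraction_of_notMem (not_not_intro hz)
  have hker : normalClosure {r} ≤ (retraction {x}ᶜ).ker :=
    Subgroup.normalClosure_le_normal (Set.singleton_subset_iff.2 hr)
  exact Subgroup.disjoint_def.2 fun hw hwr => (retraction_of_mem hw).symm.trans (hker hwr)

section

variable [DecidableEq X]

theorem isConj_lift_inl_shift (hr : exponent (Pi.single t 1) r = 1) (k : ℤ) :
    IsConj r (ShiftProduct.lift (of t) of
      (SemidirectProduct.inl (shift k (magnusHom t (Pi.single t 1) r).left))) := by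
  rw [ShiftProduct.lift_inl_shift, inl_magnusHom_left hr, lift_magnusHom_single]
  exact isConj_iff.2 ⟨_, rfl⟩

theorem ConjInto.of_shift_magnusHom_left {A : Set (X × ℤ)} {B : Set X} {k : ℤ}
    (h : ConjInto (shift k (magnusHom t (Pi.single t 1) r).left) A)
    (hr : exponent (Pi.single t 1) r = 1)
    (hAB : ∀ p ∈ A, of t ^ p.2 * of p.1 * (of t ^ p.2)⁻¹ ∈ freeFactor B) : ConjInto r B := by
  refine (conjInto_congr (isConj_lift_inl_shift hr k)).2 ?_
  refine h.map ((ShiftProduct.lift (of t) of).comp SemidirectProduct.inl) fun p hp => ?_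
  rw [MonoidHom.comp_apply, ShiftProduct.lift_inl_of]
  exact hAB p hp

theorem exists_mem_essentialLetters_of_exponent_eq_one (hr : exponent (Pi.single t 1) r = 1)
    (hyt : y ≠ t) (hy : y ∈ essentialLetters r) :
    ∃ j, (y, j) ∈ essentialLetters (magnusHom t (Pi.single t 1) r).left := by
  by_contra! h
  have hA : ConjInto (shift 0 (magnusHom t (Pi.single t 1) r).left) {p | p.1 ≠ y} := by
    rw [shift_zero, MulAut.one_apply, conjInto_iff]
    rintro ⟨_, j⟩ hp rfl
    exact h j hp
  refine hy (hA.of_shift_magnusHom_left hr fun p hp => ?_)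
  have ht : of t ∈ freeFactor {y}ᶜ := of_mem_freeFactor hyt.symm
  exact mul_mem (mul_mem (zpow_mem ht _) (of_mem_freeFactor hp)) (inv_mem (zpow_mem ht _))

theorem exists_mem_essentialLetters_snd_ne_zero (hr : exponent (Pi.single x 1) r = 1)
    (hx : x ∈ essentialLetters r) (k : ℤ) :
    ∃ z ∈ essentialLetters (shift k (magnusHom x (Pi.single x 1) r).left), z.2 ≠ 0 := by
  by_contra! h
  have hne : ConjInto (shift k (magnusHom x (Pi.single x 1) r).left) {p | p.1 ≠ x} := by
    refine conjInto_shift.2 (conjInto_of_mem (freeFactor_mono (fun p hp => hp.2)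
      (magnusHom_left_mem_freeFactor (A := Set.univ) ?_)))
    rw [freeFactor_univ]
    exact Subgroup.mem_top r
  have hzero : ConjInto (shift k (magnusHom x (Pi.single x 1) r).left) {p | p.2 = 0} :=
    conjInto_iff.2 h
  refine hx ((hne.inter hzero).of_shift_magnusHom_left hr ?_)
  rintro ⟨z, _⟩ ⟨hz, rfl⟩
  simpa using of_mem_freeFactor (A := {x}ᶜ) hz

theorem exists_mem_essentialLetters_of_exponent_ne_one (hxt : x ≠ t) (he : exponent e r = 1)
    (hr : exponent (Pi.single x 1) r ≠ 1) :
    ∃ j, (x, j) ∈ essentialLetters (magnusHom t e r).left := by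
  by_contra! h
  have hA : ConjInto (magnusHom t e r).left {p | p.1 ≠ x} := by
    rw [conjInto_iff]
    rintro ⟨_, j⟩ hp rfl
    exact h j hp
  let q : ShiftProduct X →* Multiplicative ℤ :=
    ShiftProduct.lift 1 fun z => exponent (Pi.single x 1) (of z)
  have hq : q.comp (magnusHom t e) = exponent (Pi.single x 1) := FreeGroup.ext_hom _ _ fun z => by
    rw [MonoidHom.comp_apply, lift_magnusHom_of]
    split_ifs with hzt <;> simp [exponent, hzt, hxt.symm]
  have hq1 := hA.map_eq_one (q.comp SemidirectProduct.inl) fun p hp => by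
    simp [q, exponent, Pi.single_eq_of_ne hp]
  rw [MonoidHom.comp_apply, inl_magnusHom_left he, ← MonoidHom.comp_apply, hq] at hq1
  exact hr hq1

theorem magnusHom_single_left_mem_freeFactor (hw : w ∈ freeFactor {x}ᶜ) :
    (magnusHom x (Pi.single x 1) w).left ∈ freeFactor {p | p.2 = 0} := by
  have h : Set.EqOn (magnusHom x (Pi.single x 1))
      (SemidirectProduct.inl.comp (FreeGroup.map fun z => (z, (0 : ℤ)))) (freeFactor {x}ᶜ) :=
    eqOn_freeFactor fun z (hz : z ≠ x) => by
      rw [magnusHom_of, if_neg hz, Pi.single_eq_of_ne hz]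
      rfl
  rw [h hw, MonoidHom.comp_apply, SemidirectProduct.left_inl]
  exact map_mem_of_mem_freeFactor _ (fun z _ => of_mem_freeFactor rfl) hw

theorem disjoint_freeFactor_of_exponent_eq_one
    (ih : ∀ s : FreeGroup (X × ℤ), s.norm < r.norm → Freiheit s)
    (hx : x ∈ essentialLetters r) (hyx : y ≠ x) (hy : y ∈ essentialLetters r)
    (hr : exponent (Pi.single x 1) r = 1) :
    Disjoint (freeFactor {x}ᶜ) (normalClosure {r}) := by
  refine Subgroup.disjoint_def.2 fun {w} hw hwr => ?_
  have hw0 := magnusHom_single_left_mem_freeFactor hw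
  have hwy : {p : X × ℤ | p.2 = 0} ⊆ {p | p.1 = y → p.2 = 0} := fun _ hp _ => hp
  refine eq_one_of_freiheit_shift (y := y) (by simp) hr
    (fun k => ih _ ((norm_shift_le k _).trans_lt (norm_magnusHom_left_lt _ hx)))
    (exists_mem_essentialLetters_of_exponent_eq_one hr hyx hy)
    (freeFactor_mono hwy hw0) (fun k => ?_) hwr
  obtain ⟨z, hz, hz0⟩ := exists_mem_essentialLetters_snd_ne_zero hr hx k
  have hsub : {p : X × ℤ | p.2 = 0} ⊆ {z}ᶜ := Set.subset_compl_singleton_iff.2 hz0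
  exact ⟨z, hz, freeFactor_mono hsub hw0⟩

theorem disjoint_freeFactor_of_exponent_ne_one
    (ih : ∀ s : FreeGroup (X × ℤ), s.norm < r.norm → Freiheit s)
    (htx : t ≠ x) (ht : t ∈ essentialLetters r) (hr : exponent (Pi.single x 1) r ≠ 1) :
    Disjoint (freeFactor {x}ᶜ) (normalClosure {r}) := by
  refine Subgroup.disjoint_def.2 fun {w} hw hwr => ?_
  -- These weights are chosen so that `r` has total weight `0`.
  obtain ⟨e, het, her⟩ : ∃ e : X → ℤ, e t ≠ 0 ∧ exponent e r = 1 := by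
    refine ⟨(exponent (Pi.single x 1) r).toAdd • Pi.single t 1 +
      (-(exponent (Pi.single t 1) r).toAdd) • Pi.single x 1, ?_, ?_⟩
    · simpa [htx] using hr
    · refine Multiplicative.toAdd.injective ?_
      simp only [exponent_smul_add_smul, toAdd_mul, toAdd_zpow, toAdd_one, smul_eq_mul]
      ring
  have hwx : (magnusHom t e w).left ∈ freeFactor {p | p.1 ≠ x} :=
    freeFactor_mono (fun _ hp => hp.1) (magnusHom_left_mem_freeFactor hw)
  obtain ⟨j, hj⟩ := exists_mem_essentialLetters_of_exponent_ne_one htx.symm her hr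
  refine eq_one_of_freiheit_shift (y := x) het her
    (fun k => ih _ ((norm_shift_le k _).trans_lt (norm_magnusHom_left_lt _ ht)))
    ⟨j, hj⟩ (freeFactor_mono (fun p hp hpx => absurd hpx hp) hwx) (fun k => ?_) hwr
  exact ⟨(x, j + k), mem_essentialLetters_shift.2 hj,
    freeFactor_mono (Set.subset_compl_singleton_iff.2 (not_not_intro rfl)) hwx⟩

end

theorem freiheitssatz (r : FreeGroup X) : Freiheit r := by
  classical
  induction hn : r.norm using Nat.strong_induction_on generalizing X with | _ n ih
  subst hn
  have ih' : ∀ s : FreeGroup (X × ℤ), s.norm < r.norm → Freiheit s := fun s hs =>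
    ih _ hs s (by congr)
  intro x hx
  by_cases h : essentialLetters r ⊆ {x}
  · exact (conjInto_iff.2 h).disjoint_freeFactor
  obtain ⟨t, ht, htx⟩ := Set.not_subset.1 h
  by_cases hr : exponent (Pi.single x 1) r = 1
  · exact disjoint_freeFactor_of_exponent_eq_one ih' hx htx ht hr
  · exact disjoint_freeFactor_of_exponent_ne_one ih' htx ht hr

end MagnusInduction

section MagnusConjugacy

variable {X : Type u} {x : X} {r : FreeGroup X}

theorem mem_essentialLetters_of_of_mem_normalClosure (hx : of x ∈ normalClosure {r}) :
    x ∈ essentialLetters r := fun h => by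
  classical
  have hr : exponent (Pi.single x 1) r = 1 := h.map_eq_one _ fun z hz => by
    simp [exponent, Pi.single_eq_of_ne hz]
  have hker : normalClosure {r} ≤ (exponent (Pi.single x 1)).ker :=
    Subgroup.normalClosure_le_normal (Set.singleton_subset_iff.2 hr)
  simpa [exponent] using hker hx

theorem ConjInto.isConj_of_or_inv (h : ConjInto r {x}) (hx : of x ∈ normalClosure {r}) :
    IsConj r (of x) ∨ IsConj r (of x)⁻¹ := by
  obtain ⟨v, hv, hrv⟩ := h
  rw [freeFactor, Set.image_singleton, Subgroup.mem_closure_singleton] at hv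
  obtain ⟨k, rfl⟩ := hv
  let f := exponent (1 : X → ℤ)
  have hf : f (of x) = Multiplicative.ofAdd 1 := by simp [f, exponent]
  have hle : normalClosure {of x ^ k} ≤ (Subgroup.zpowers (f (of x ^ k))).comap f :=
    Subgroup.normalClosure_le_normal
      (Set.singleton_subset_iff.2 (Subgroup.mem_zpowers (f (of x ^ k))))
  rw [normalClosure_singleton_congr hrv] at hx
  obtain ⟨l, hl⟩ := Subgroup.mem_zpowers_iff.1 (hle hx)
  have hkl : k * l = 1 := by
    rw [map_zpow, hf, ← zpow_mul, ← ofAdd_zsmul] at hl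
    simpa using Multiplicative.ofAdd.injective hl
  rcases Int.eq_one_or_neg_one_of_mul_eq_one hkl with rfl | rfl
  · exact Or.inl (by rwa [zpow_one] at hrv)
  · exact Or.inr (by rwa [zpow_neg_one] at hrv)

theorem retraction_compl_singleton_mem_normalClosure (hx : of x ∈ normalClosure {r}) :
    retraction {x}ᶜ r ∈ normalClosure {r} := by
  let π := QuotientGroup.mk' (normalClosure {r})
  have h : π.comp (retraction {x}ᶜ) = π := FreeGroup.ext_hom _ _ fun z => by
    rw [MonoidHom.comp_apply]
    by_cases hz : z = x
    · rw [hz, retraction_of_notMem (not_not_intro rfl), map_one]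
      exact ((QuotientGroup.eq_one_iff _).2 hx).symm
    · rw [retraction_of_mem (of_mem_freeFactor hz)]
  have hr : π r = 1 := (QuotientGroup.eq_one_iff r).2 (Subgroup.subset_normalClosure rfl)
  exact (QuotientGroup.eq_one_iff _).1 ((DFunLike.congr_fun h r).trans hr)

theorem exponent_retraction_compl_singleton {e : X → ℤ} (he : e x = 0) :
    exponent e (retraction {x}ᶜ r) = exponent e r := by
  have h : (exponent e).comp (retraction {x}ᶜ) = exponent e := FreeGroup.ext_hom _ _ fun z => by
    rw [MonoidHom.comp_apply]
    by_cases hz : z = x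
    · rw [hz, retraction_of_notMem (not_not_intro rfl), map_one]
      simp [exponent, he]
    · rw [retraction_of_mem (of_mem_freeFactor hz)]
  exact DFunLike.congr_fun h r

theorem exists_of_mem_normalClosure_shift [DecidableEq X] {t : X} (hxt : x ≠ t)
    (hr : exponent (Pi.single t 1) r = 1) (hx : of x ∈ normalClosure {r}) :
    ∃ k, of (x, 0) ∈ normalClosure {shift k (magnusHom t (Pi.single t 1) r).left} := by
  have hx0 : (magnusHom t (Pi.single t 1) (of x)).left = of (x, 0) := by
    rw [magnusHom_of, if_neg hxt]
  exact exists_mem_normalClosure_shift (fun k => freiheitssatz _)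
    (exists_mem_essentialLetters_of_exponent_eq_one hr hxt
      (mem_essentialLetters_of_of_mem_normalClosure hx))
    (of_mem_freeFactor fun _ => rfl) (hx0 ▸ magnusHom_left_mem_shiftClosure hr hx)

theorem isConj_of_or_inv_of_mem_normalClosure (hx : of x ∈ normalClosure {r}) :
    IsConj r (of x) ∨ IsConj r (of x)⁻¹ := by
  classical
  induction hn : r.norm using Nat.strong_induction_on generalizing X with | _ n ih
  subst hn
  have hxr := mem_essentialLetters_of_of_mem_normalClosure hx
  by_cases h : essentialLetters r ⊆ {x}
  · exact (conjInto_iff.2 h).isConj_of_or_inv hx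
  obtain ⟨t, ht, htx⟩ := Set.not_subset.1 h
  have hret : retraction {x}ᶜ r = 1 := by
    refine Subgroup.disjoint_def.1 (freiheitssatz r x hxr) ?_
      (retraction_compl_singleton_mem_normalClosure hx)
    have hr : r ∈ freeFactor Set.univ := freeFactor_univ (X := X) ▸ Subgroup.mem_top r
    exact freeFactor_mono Set.inter_subset_left (retraction_mem_inter {x}ᶜ hr)
  have hr : exponent (Pi.single t 1) r = 1 := by
    rw [← exponent_retraction_compl_singleton (x := x) (Pi.single_eq_of_ne' htx 1), hret, map_one]
  obtain ⟨k, hk⟩ := exists_of_mem_normalClosure_shift (Ne.symm htx) hr hx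
  have transfer : ∀ v, IsConj (shift k (magnusHom t (Pi.single t 1) r).left) v →
      IsConj r (ShiftProduct.lift (of t) of (SemidirectProduct.inl v)) := fun v hv =>
    (isConj_lift_inl_shift hr k).trans <|
      ((ShiftProduct.lift (of t) of).comp SemidirectProduct.inl).map_isConj hv
  have hlt := (norm_shift_le k _).trans_lt (norm_magnusHom_left_lt (Pi.single t 1) ht)
  exact (ih _ hlt hk (by congr)).imp (fun h => by simpa using transfer _ h)
    fun h => by simpa using transfer _ h

end MagnusConjugacy

section Primitive

variable {X : Type u} {g h : FreeGroup X}

/-- An element of a free group is primitive if it belongs to some basis, that is, if it is the image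
of a letter under an automorphism. -/
def IsPrimitive (g : FreeGroup X) : Prop := ∃ (e : MulAut (FreeGroup X)) (x : X), e (of x) = g

theorem isPrimitive_of (x : X) : IsPrimitive (of x) := ⟨1, x, rfl⟩

theorem IsPrimitive.map (hg : IsPrimitive g) (e : MulAut (FreeGroup X)) : IsPrimitive (e g) := by
  obtain ⟨f, x, rfl⟩ := hg
  exact ⟨e * f, x, rfl⟩

theorem IsPrimitive.of_isConj (hg : IsPrimitive g) (hgh : IsConj g h) : IsPrimitive h := by
  obtain ⟨c, rfl⟩ := isConj_iff.1 hgh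
  exact hg.map (MulAut.conj c)

theorem IsPrimitive.exists_basis (hg : IsPrimitive g) :
    ∃ b : X → FreeGroup X, Function.Bijective (FreeGroup.lift b) ∧ g ∈ Set.range b := by
  obtain ⟨e, x, rfl⟩ := hg
  refine ⟨fun x => e (of x), ?_, x, rfl⟩
  have he : FreeGroup.lift (fun x => e (of x)) = e.toMonoidHom := by ext; simp
  rw [he]
  exact e.bijective

/-- The automorphism of a free group raising every letter `x` to the power `s x = ±1`. -/
def signChange (s : X → ℤˣ) : MulAut (FreeGroup X) :=
  have h : (FreeGroup.lift fun x => of x ^ (s x : ℤ)).comp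
      (FreeGroup.lift fun x => of x ^ (s x : ℤ)) = MonoidHom.id (FreeGroup X) := by
    ext x
    simp [← zpow_mul, ← Units.val_mul]
  MonoidHom.toMulEquiv _ _ h h

@[simp]
theorem signChange_of (s : X → ℤˣ) (x : X) : signChange s (of x) = of x ^ (s x : ℤ) :=
  FreeGroup.lift_apply_of

theorem IsPrimitive.inv (hg : IsPrimitive g) : IsPrimitive g⁻¹ := by
  obtain ⟨e, x, rfl⟩ := hg
  refine ⟨e * signChange (fun _ => -1), x, ?_⟩
  simp

theorem isPrimitive_of_of_mem_normalClosure {x : X} (hx : of x ∈ normalClosure {g}) :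
    IsPrimitive g := by
  rcases isConj_of_or_inv_of_mem_normalClosure hx with h | h
  exacts [(isPrimitive_of x).of_isConj h.symm, (isPrimitive_of x).inv.of_isConj h.symm]

theorem IsPrimitive.of_mem_normalClosure (hg : IsPrimitive g) (hgh : g ∈ normalClosure {h}) :
    IsPrimitive h := by
  obtain ⟨e, x, rfl⟩ := hg
  have hx : of x ∈ normalClosure {e.symm h} := by
    have := Subgroup.mem_map_of_mem e.symm.toMonoidHom hgh
    rw [Subgroup.map_normalClosure _ _ e.symm.surjective] at this
    simpa using this
  simpa using (isPrimitive_of_of_mem_normalClosure hx).map e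

open Classical in
/-- The Nielsen automorphism fixing the letter `x` and multiplying every other letter `y` by the
powers `x ^ k y` on the left and `x ^ l y` on the right. -/
noncomputable def nielsen (x : X) (k l : X → ℤ) : MulAut (FreeGroup X) :=
  have h (k l : X → ℤ) :
      (FreeGroup.lift fun y => if y = x then of x else of x ^ (-k y) * of y * of x ^ (-l y)).comp
        (FreeGroup.lift fun y => if y = x then of x else of x ^ k y * of y * of x ^ l y) =
      MonoidHom.id (FreeGroup X) := by
    ext y
    by_cases hy : y = x
    · simp [hy]
    · simp [hy, mul_assoc]
  MonoidHom.toMulEquiv _ _ (h k l) (by simpa only [Pi.neg_apply, neg_neg] using h (-k) (-l))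

theorem nielsen_of_self (x : X) (k l : X → ℤ) : nielsen x k l (of x) = of x :=
  FreeGroup.lift_apply_of.trans (if_pos rfl)

theorem nielsen_of_ne {x y : X} (k l : X → ℤ) (hy : y ≠ x) :
    nielsen x k l (of y) = of x ^ k y * of y * of x ^ l y :=
  FreeGroup.lift_apply_of.trans (if_neg hy)

theorem exists_mulAut_of_ne {x y : X} (hxy : y ≠ x) (k l : ℤ) :
    ∃ e : MulAut (FreeGroup X), (∀ z, z ≠ y → e (of z) = of z) ∧
      e (of y) = of x ^ k * of y * of x ^ l := by
  classical
  refine ⟨nielsen x (Pi.single y k) (Pi.single y l), fun z hz => ?_, ?_⟩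
  · rcases eq_or_ne z x with rfl | hzx
    · exact nielsen_of_self _ _ _
    · simp [nielsen_of_ne _ _ hzx, Pi.single_eq_of_ne hz]
  · rw [nielsen_of_ne _ _ hxy, Pi.single_eq_same, Pi.single_eq_same]

/-- The homomorphism `φ` maps some primitive element to `1`. -/
def KillsPrimitive {G : Type*} [Group G] (φ : FreeGroup X →* G) : Prop :=
  ∃ g, IsPrimitive g ∧ φ g = 1

theorem KillsPrimitive.of_comp {G : Type*} [Group G] {φ : FreeGroup X →* G}
    (e : MulAut (FreeGroup X)) (h : KillsPrimitive (φ.comp e.toMonoidHom)) : KillsPrimitive φ := by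
  obtain ⟨g, hg, hφg⟩ := h
  exact ⟨e g, hg.map e, hφg⟩

end Primitive

section Folding

variable {Y : Type*} {T : Finset (FreeGroup Y)} {p v g : FreeGroup Y}

/-- The elements `u⁻¹ * d * w` with `u, w ∈ T` and `d` a letter or its inverse. When `T` is suffix
closed, they are read along the loops at `1` that run inside the tree `T` except for one additional
edge, labelled `d`, from the vertex `u` to the vertex `w`. -/
def edgeElements (T : Finset (FreeGroup Y)) : Set (FreeGroup Y) :=
  {g | ∃ u ∈ T, ∃ w ∈ T, ∃ d, g = u⁻¹ * FreeGroup.mk [d] * w}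

theorem inv_mem_edgeElements (hg : g ∈ edgeElements T) : g⁻¹ ∈ edgeElements T := by
  obtain ⟨u, hu, w, hw, d, rfl⟩ := hg
  refine ⟨w, hw, u, hu, (d.1, !d.2), ?_⟩
  simp only [mul_inv_rev, FreeGroup.inv_mk, inv_inv, mul_assoc]
  rfl

variable [DecidableEq Y]

theorem exists_eq_mk_singleton_mul (hg : g ≠ 1) :
    ∃ d u, g = FreeGroup.mk [d] * u ∧ g.toWord = d :: u.toWord := by
  obtain ⟨d, L, hL⟩ := List.exists_cons_of_ne_nil (mt FreeGroup.toWord_eq_nil_iff.1 hg)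
  have hLred : FreeGroup.IsReduced L :=
    List.IsChain.tail (hL ▸ FreeGroup.isReduced_toWord : FreeGroup.IsReduced (d :: L))
  refine ⟨d, FreeGroup.mk L, ?_, ?_⟩
  · rw [FreeGroup.mul_mk, List.singleton_append, ← hL, FreeGroup.mk_toWord]
  · rw [FreeGroup.toWord_mk, hLred.reduce_eq, hL]

theorem mem_edgeElements_of_suffix_mem (hg : g ≠ 1)
    (hT : ∀ u : FreeGroup Y, u.toWord <:+ g.toWord → u ∈ T) : g ∈ edgeElements T := by
  obtain ⟨d, u, hgu, hword⟩ := exists_eq_mk_singleton_mul hg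
  refine ⟨1, hT 1 List.nil_suffix, u, hT u ?_, d, by rwa [inv_one, one_mul]⟩
  rw [hword]
  exact List.suffix_cons d u.toWord

theorem eq_or_suffix_of_suffix_mk_mul {d : Y × Bool} {u w : FreeGroup Y}
    (h : w.toWord <:+ (FreeGroup.mk [d] * u).toWord) :
    w = FreeGroup.mk [d] * u ∨ w.toWord <:+ u.toWord := by
  have hred : (FreeGroup.mk [d] * u).toWord = d :: u.toWord ∨
      (FreeGroup.mk [d] * u).toWord <:+ u.toWord := by
    rw [FreeGroup.toWord_mul, FreeGroup.toWord_mk, FreeGroup.reduce_singleton,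
      List.singleton_append, FreeGroup.reduce.cons, FreeGroup.reduce_toWord]
    cases u.toWord with
    | nil => exact .inl rfl
    | cons c L =>
      dsimp only
      split_ifs
      exacts [.inr (List.suffix_cons c L), .inl rfl]
  rcases hred with hred | hred
  · rw [hred, List.suffix_cons_iff, ← hred] at h
    exact h.imp_left fun h => FreeGroup.toWord_injective h
  · exact .inr (h.trans hred)

/-- A finite set of reduced words closed under passing to suffixes: the vertices of a finite
subtree, rooted at `1`, of the Cayley tree of the free group. -/
def IsSuffixClosed (T : Finset (FreeGroup Y)) : Prop :=
  1 ∈ T ∧ ∀ u ∈ T, ∀ w : FreeGroup Y, w.toWord <:+ u.toWord → w ∈ T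

theorem IsSuffixClosed.induction (hT : IsSuffixClosed T) {P : FreeGroup Y → Prop} (one : P 1)
    (mk_mul : ∀ d u, u ∈ T → FreeGroup.mk [d] * u ∈ T →
      (FreeGroup.mk [d] * u).toWord = d :: u.toWord → P u → P (FreeGroup.mk [d] * u))
    {u : FreeGroup Y} (hu : u ∈ T) : P u := by
  induction hL : u.toWord generalizing u with
  | nil => rwa [FreeGroup.toWord_eq_nil_iff.1 hL]
  | cons c L ih =>
    obtain ⟨d, w, rfl, hword⟩ := exists_eq_mk_singleton_mul (g := u) <| by
      rintro rfl
      exact List.cons_ne_nil c L hL.symm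
    have hw : w ∈ T := hT.2 _ hu w (hword ▸ List.suffix_cons d w.toWord)
    exact mk_mul d w hw hu hword (ih hw (List.cons.inj (hword.symm.trans hL)).2)

/-- The map of vertices identifying `v` with `p`, which carries the branch of the tree beyond `v`
along. -/
def graft (v p u : FreeGroup Y) : FreeGroup Y :=
  if v.toWord <:+ u.toWord then u * (v⁻¹ * p) else u

theorem exists_graft_eq_mul_zpow (v p u : FreeGroup Y) :
    ∃ k : ℤ, graft v p u = u * (v⁻¹ * p) ^ k := by
  rw [graft]
  split_ifs
  exacts [⟨1, by rw [zpow_one]⟩, ⟨0, by rw [zpow_zero, mul_one]⟩]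

theorem graft_of_not_suffix {u : FreeGroup Y} (hu : ¬ v.toWord <:+ u.toWord) : graft v p u = u :=
  if_neg hu

theorem graft_self : graft v p v = p := by
  rw [graft, if_pos List.suffix_rfl, mul_inv_cancel_left]

theorem graft_mk_mul {d : Y × Bool} {u : FreeGroup Y}
    (hu : (FreeGroup.mk [d] * u).toWord = d :: u.toWord) (huv : v ≠ FreeGroup.mk [d] * u) :
    graft v p (FreeGroup.mk [d] * u) = FreeGroup.mk [d] * graft v p u := by
  have hiff : v.toWord <:+ (FreeGroup.mk [d] * u).toWord ↔ v.toWord <:+ u.toWord := by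
    rw [hu, List.suffix_cons_iff, ← hu, FreeGroup.toWord_injective.eq_iff, or_iff_right huv]
  simp only [graft, hiff, mul_ite, mul_assoc]

theorem isSuffixClosed_image_graft (hT : IsSuffixClosed T) (hp : p ∈ T)
    (hvp : ¬ v.toWord <:+ p.toWord) : IsSuffixClosed (T.image (graft v p)) := by
  have mem_of_suffix {u w : FreeGroup Y} (hu : u ∈ T) (hvu : ¬ v.toWord <:+ u.toWord)
      (hw : w.toWord <:+ u.toWord) : w ∈ T.image (graft v p) :=
    Finset.mem_image.2 ⟨w, hT.2 u hu w hw, graft_of_not_suffix fun h => hvu (h.trans hw)⟩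
  have hv : ¬ v.toWord <:+ (1 : FreeGroup Y).toWord := fun h => hvp (h.trans List.nil_suffix)
  refine ⟨mem_of_suffix hT.1 hv List.suffix_rfl, Finset.forall_mem_image.2 fun u hu => ?_⟩
  refine hT.induction (P := fun u => ∀ w : FreeGroup Y, w.toWord <:+ (graft v p u).toWord →
    w ∈ T.image (graft v p)) ?_ ?_ hu
  · rw [graft_of_not_suffix hv]
    exact fun w hw => mem_of_suffix hT.1 hv hw
  · intro d u _ hdu hword ih w hw
    rcases eq_or_ne v (FreeGroup.mk [d] * u) with hvu | hvu
    · rw [← hvu, graft_self] at hw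
      exact mem_of_suffix hp hvp hw
    · rw [graft_mk_mul hword hvu] at hw
      rcases eq_or_suffix_of_suffix_mk_mul hw with rfl | hw
      · exact Finset.mem_image.2 ⟨_, hdu, graft_mk_mul hword hvu⟩
      · exact ih w hw

theorem card_image_graft_lt (hv : v ∈ T) (hp : p ∈ T) (hvp : ¬ v.toWord <:+ p.toWord) :
    (T.image (graft v p)).card < T.card := by
  refine lt_of_le_of_ne Finset.card_image_le fun h => hvp ?_
  have hpv : graft v p v = graft v p p := by rw [graft_self, graft_of_not_suffix hvp]
  rw [Finset.card_image_iff.1 h hv hp hpv]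

theorem inv_mul_mem_edgeElements_image_graft (hT : IsSuffixClosed T) (hv : v ∈ T) (hp : p ∈ T)
    (hvp : ¬ v.toWord <:+ p.toWord) : v⁻¹ * p ∈ edgeElements (T.image (graft v p)) := by
  refine hT.induction (P := fun u => v = u → v⁻¹ * p ∈ _) ?_ ?_ hv rfl
  · rintro rfl
    exact absurd List.nil_suffix hvp
  · rintro d u hu - hword - rfl
    have hvu : ¬ (FreeGroup.mk [d] * u).toWord <:+ u.toWord := fun h => by
      simpa [hword] using h.length_le
    refine ⟨u, Finset.mem_image.2 ⟨u, hu, graft_of_not_suffix hvu⟩, p,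
      Finset.mem_image.2 ⟨p, hp, graft_of_not_suffix hvp⟩, (d.1, !d.2), ?_⟩
    rw [mul_inv_rev, FreeGroup.inv_mk]
    rfl

theorem exists_zpow_mul_mem_edgeElements_image_graft (v p : FreeGroup Y)
    (hg : g ∈ edgeElements T) :
    ∃ k l : ℤ, (v⁻¹ * p) ^ k * g * (v⁻¹ * p) ^ l ∈ edgeElements (T.image (graft v p)) := by
  obtain ⟨u, hu, w, hw, d, rfl⟩ := hg
  obtain ⟨k, hk⟩ := exists_graft_eq_mul_zpow v p u
  obtain ⟨l, hl⟩ := exists_graft_eq_mul_zpow v p w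
  refine ⟨-k, l, _, Finset.mem_image_of_mem _ hu, _, Finset.mem_image_of_mem _ hw, d, ?_⟩
  rw [hk, hl, mul_inv_rev, zpow_neg]
  simp only [mul_assoc]

theorem IsSuffixClosed.exists_fold (hT : IsSuffixClosed T) (hv : v ∈ T) (hp : p ∈ T)
    (hvp : v ≠ p) : ∃ T' : Finset (FreeGroup Y), IsSuffixClosed T' ∧ T'.card < T.card ∧
      v⁻¹ * p ∈ edgeElements T' ∧ ∀ g ∈ edgeElements T, ∃ k l : ℤ,
        (v⁻¹ * p) ^ k * g * (v⁻¹ * p) ^ l ∈ edgeElements T' := by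
  by_cases h : v.toWord <:+ p.toWord
  · have h' : ¬ p.toWord <:+ v.toWord := fun h' => hvp <| FreeGroup.toWord_injective <|
      h.eq_of_length_le h'.length_le
    have hinv : v⁻¹ * p = (p⁻¹ * v)⁻¹ := by rw [mul_inv_rev, inv_inv]
    refine ⟨_, isSuffixClosed_image_graft hT hv h', card_image_graft_lt hp hv h',
      hinv ▸ inv_mem_edgeElements (inv_mul_mem_edgeElements_image_graft hT hp hv h'),
      fun g hg => ?_⟩
    obtain ⟨k, l, hkl⟩ := exists_zpow_mul_mem_edgeElements_image_graft p v hg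
    exact ⟨-k, -l, by rwa [hinv, inv_zpow', inv_zpow', neg_neg, neg_neg]⟩
  · exact ⟨_, isSuffixClosed_image_graft hT hp h, card_image_graft_lt hv hp h,
      inv_mul_mem_edgeElements_image_graft hT hv hp h,
      fun g => exists_zpow_mul_mem_edgeElements_image_graft v p⟩

end Folding

section Covering

theorem exists_perm_of_biUnique {α : Type*} [Finite α] {R : α → α → Prop}
    (hR : Relator.BiUnique R) : ∃ π : Equiv.Perm α, ∀ a b, R a b → π a = b := by
  have := Fintype.ofFinite α
  choose! f hf using fun (a : α) (h : ∃ b, R a b) => h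
  have hinj : Set.InjOn f {a | ∃ b, R a b} := fun a ha a' ha' haa' =>
    hR.1 (hf a ha) (haa' ▸ hf a' ha')
  obtain ⟨g, hg⟩ := Set.MapsTo.exists_equiv_extend_of_card_eq (t := Finset.univ) rfl
    (fun _ _ => Finset.mem_coe.2 (Finset.mem_univ _)) hinj
  refine ⟨g.trans (Equiv.subtypeUnivEquiv Finset.mem_univ), fun a b hab => ?_⟩
  exact (hg a ⟨b, hab⟩).trans (hR.2 (hf a ⟨b, hab⟩) hab)

variable {X Y : Type*} {T : Finset (FreeGroup Y)} {φ : FreeGroup X →* FreeGroup Y} {a : X → Y}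
  {p q : X → T}

/-- The adjacency relation, for edges labelled `y`, of the finite graph with vertex set `T` obtained
from the Cayley tree by adding for every `x : X` an edge labelled `a x` between `p x` and `q x`. The
edge labelled `y` of the Cayley tree at a vertex `u` leads to `y * u`. -/
def LabelledEdge (T : Finset (FreeGroup Y)) (a : X → Y) (p q : X → T) (y : Y) (u w : T) : Prop :=
  (w : FreeGroup Y) = of y * u ∨ ∃ x, a x = y ∧ q x = u ∧ p x = w

theorem biUnique_labelledEdge
    (hpq : ∀ (x : X) (u w : T), (p x : FreeGroup Y)⁻¹ * of (a x) * q x ≠ (u : FreeGroup Y)⁻¹ * w)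
    (hp : Function.Injective fun x => (a x, p x)) (hq : Function.Injective fun x => (a x, q x))
    (y : Y) : Relator.BiUnique (LabelledEdge T a p q y) := by
  have tree_ne_extra {u u' w w' : T} (hw : (w : FreeGroup Y) = of y * u) {x : X} (hx : a x = y)
      (hu' : q x = u') (hw' : p x = w') : w ≠ w' ∧ u ≠ u' := by
    subst hx hu' hw'
    refine ⟨fun h => hpq x u (q x) ?_, fun h => hpq x (p x) w ?_⟩
    · rw [← h, hw, mul_inv_rev, inv_mul_cancel_right]
    · rw [← h, hw, mul_assoc]
  constructor
  · rintro u u' w (hw | ⟨x, hx, hu, hw⟩) (hw' | ⟨x', hx', hu', hw'⟩)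
    · exact Subtype.ext (mul_left_cancel (hw.symm.trans hw'))
    · exact absurd rfl (tree_ne_extra hw hx' hu' hw').1
    · exact absurd rfl (tree_ne_extra hw' hx hu hw).1
    · have hxx' : x = x' := hp (Prod.ext (hx.trans hx'.symm) (hw.trans hw'.symm))
      rw [← hu, ← hu', hxx']
  · rintro u w w' (hw | ⟨x, hx, hu, hw⟩) (hw' | ⟨x', hx', hu', hw'⟩)
    · exact Subtype.ext (hw.trans hw'.symm)
    · exact absurd rfl (tree_ne_extra hw hx' hu' hw').2
    · exact absurd rfl (tree_ne_extra hw' hx hu hw).2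
    · have hxx' : x = x' := hq (Prod.ext (hx.trans hx'.symm) (hu.trans hu'.symm))
      rw [← hw, ← hw', hxx']

-- A graph whose labelled edges are bi-unique extends to a finite covering of the rose, on which
-- `FreeGroup Y` acts; loops at `1` fix the vertex `1`, whereas `u` moves `1` to `u`.
theorem IsSuffixClosed.eq_one_of_biUnique [DecidableEq Y] (hT : IsSuffixClosed T)
    (hφ : Function.Surjective φ)
    (hpq : ∀ x, φ (of x) = (p x : FreeGroup Y)⁻¹ * of (a x) * q x)
    (hR : ∀ y, Relator.BiUnique (LabelledEdge T a p q y)) {u : FreeGroup Y} (hu : u ∈ T) :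
    u = 1 := by
  choose π hπ using fun y => exists_perm_of_biUnique (hR y)
  let ψ : FreeGroup Y →* Equiv.Perm T := FreeGroup.lift π
  let o : T := ⟨1, hT.1⟩
  have hψ_of {y : Y} {s t : T} (h : LabelledEdge T a p q y s t) : ψ (of y) s = t := by
    rw [show ψ (of y) = π y from FreeGroup.lift_apply_of, hπ y _ _ h]
  have hψ_mem (u : FreeGroup Y) (hu : u ∈ T) : ψ u o = ⟨u, hu⟩ := by
    refine hT.induction (P := fun u => ∀ hu, ψ u o = ⟨u, hu⟩) (fun _ => by rw [map_one]; rfl) ?_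
      hu hu
    rintro ⟨y, ε⟩ u hu - - ih hdu
    rw [map_mul, Equiv.Perm.mul_apply, ih hu]
    cases ε
    · change ψ (of y)⁻¹ ⟨u, hu⟩ = _
      rw [map_inv, Equiv.Perm.inv_eq_iff_eq]
      exact (hψ_of (.inl (mul_inv_cancel_left (of y) u).symm)).symm
    · exact hψ_of (.inl rfl)
  have hφ_fix : (MulAction.stabilizer (Equiv.Perm T) o).comap (ψ.comp φ) = ⊤ := by
    rw [← top_le_iff, ← FreeGroup.closure_range_of, Subgroup.closure_le, Set.range_subset_iff]
    intro x
    change ψ (φ (of x)) o = o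
    rw [hpq, map_mul, map_mul, map_inv, Equiv.Perm.mul_apply, Equiv.Perm.mul_apply,
      hψ_mem _ (q x).2, hψ_of (.inr ⟨x, rfl, rfl, rfl⟩), Equiv.Perm.inv_eq_iff_eq, hψ_mem _ (p x).2]
  obtain ⟨w, rfl⟩ := hφ u
  have hw : ψ (φ w) o = o := Subgroup.mem_comap.1 (hφ_fix ▸ Subgroup.mem_top w)
  exact congrArg Subtype.val ((hψ_mem _ hu).symm.trans hw)

end Covering

section KillsPrimitive

variable {X Y : Type*} {T : Finset (FreeGroup Y)} {φ : FreeGroup X →* FreeGroup Y}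

theorem exists_zpow_eq_of_mem_edgeElements {g : FreeGroup Y} (hg : g ∈ edgeElements T) :
    ∃ (s : ℤˣ) (y : Y) (u w : T), g ^ (s : ℤ) = (u : FreeGroup Y)⁻¹ * of y * w := by
  obtain ⟨u, hu, w, hw, ⟨y, _ | _⟩, rfl⟩ := hg
  · refine ⟨-1, y, ⟨w, hw⟩, ⟨u, hu⟩, ?_⟩
    rw [Units.val_neg, Units.val_one, zpow_neg_one, mul_inv_rev, mul_inv_rev, inv_inv, mul_assoc]
    rfl
  · exact ⟨1, y, ⟨u, hu⟩, ⟨w, hw⟩, zpow_one _⟩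

theorem IsSuffixClosed.exists_fold_map [DecidableEq Y] (hT : IsSuffixClosed T) {v w : T}
    (hvw : v ≠ w) {x : X} (hx : φ (of x) = (v : FreeGroup Y)⁻¹ * w)
    (hφT : ∀ y, y ≠ x → φ (of y) ∈ edgeElements T) :
    ∃ T' : Finset (FreeGroup Y), IsSuffixClosed T' ∧ T'.card < T.card ∧
      ∃ e : MulAut (FreeGroup X), ∀ y, φ (e (of y)) ∈ edgeElements T' := by
  obtain ⟨T', hT', hcard, hmem, hfold⟩ := hT.exists_fold v.2 w.2 (Subtype.coe_ne_coe.2 hvw)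
  choose! k l hkl using hfold
  refine ⟨T', hT', hcard, nielsen x (fun y => k (φ (of y))) (fun y => l (φ (of y))), fun y => ?_⟩
  rcases eq_or_ne y x with rfl | hy
  · rwa [nielsen_of_self, hx]
  · rw [nielsen_of_ne _ _ hy, map_mul, map_mul, map_zpow, map_zpow, hx]
    exact hkl _ (hφT y hy)

variable [Fintype X] [Fintype Y]

theorem IsSuffixClosed.exists_foldable [DecidableEq Y] (hXY : Fintype.card Y < Fintype.card X)
    (hT : IsSuffixClosed T) (hφ : Function.Surjective φ) {a : X → Y} {p q : X → T}
    (hpq : ∀ x, φ (of x) = (p x : FreeGroup Y)⁻¹ * of (a x) * q x) :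
    ∃ (x : X) (e : MulAut (FreeGroup X)) (u w : T),
      (∀ y, y ≠ x → e (of y) = of y) ∧ φ (e (of x)) = (u : FreeGroup Y)⁻¹ * w := by
  by_contra! hne
  have hp : Function.Injective fun x => (a x, p x) := fun x y hxy => by
    obtain ⟨ha, hp⟩ := Prod.mk.inj hxy
    by_contra hxy
    obtain ⟨e, he, hey⟩ := exists_mulAut_of_ne (Ne.symm hxy) (-1) 0
    refine hne y e (q x) (q y) he ?_
    rw [hey]
    simp [hpq, ha, hp, mul_assoc]
  have hq : Function.Injective fun x => (a x, q x) := fun x y hxy => by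
    obtain ⟨ha, hq⟩ := Prod.mk.inj hxy
    by_contra hxy
    obtain ⟨e, he, hey⟩ := exists_mulAut_of_ne (Ne.symm hxy) 0 (-1)
    refine hne y e (p y) (p x) he ?_
    rw [hey]
    simp [hpq, ha, hq, mul_assoc]
  have hR := biUnique_labelledEdge (fun x u w => hpq x ▸ hne x 1 u w fun _ _ => rfl) hp hq
  obtain ⟨x, y, hxy, ha⟩ := Fintype.exists_ne_map_eq_of_card_lt a hXY
  refine hxy (hp (Prod.ext ha (Subtype.ext ?_)))
  exact (hT.eq_one_of_biUnique hφ hpq hR (p x).2).trans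
    (hT.eq_one_of_biUnique hφ hpq hR (p y).2).symm

theorem IsSuffixClosed.killsPrimitive [DecidableEq Y] (hXY : Fintype.card Y < Fintype.card X)
    (hT : IsSuffixClosed T) (hφ : Function.Surjective φ)
    (hφT : ∀ x, φ (of x) ∈ edgeElements T) : KillsPrimitive φ := by
  induction hn : T.card using Nat.strong_induction_on generalizing T φ with
  | _ n ih =>
    choose s a p q hpq using fun x => exists_zpow_eq_of_mem_edgeElements (hφT x)
    let f := signChange s
    have hf : ∀ x, φ (f (of x)) = (p x : FreeGroup Y)⁻¹ * of (a x) * q x := by simp [f, hpq]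
    obtain ⟨x, e, v, w, he, hx⟩ := hT.exists_foldable hXY (φ := φ.comp f.toMonoidHom)
      (hφ.comp f.surjective) hf
    refine .of_comp (f * e) ?_
    rcases eq_or_ne v w with rfl | hvw
    · exact ⟨of x, isPrimitive_of x, hx.trans (inv_mul_cancel _)⟩
    obtain ⟨T', hT', hcard, e', he'⟩ := hT.exists_fold_map hvw
      (φ := φ.comp (f * e).toMonoidHom) hx fun y hy => by
        have hy' : φ (f (e (of y))) = (p y : FreeGroup Y)⁻¹ * of (a y) * q y := by rw [he y hy, hf]
        exact ⟨p y, (p y).2, q y, (q y).2, (a y, true), hy'⟩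
    exact .of_comp e' <| ih _ (hn ▸ hcard) hT'
      ((hφ.comp (f * e).surjective).comp e'.surjective) he' rfl

theorem killsPrimitive_of_surjective (hXY : Fintype.card Y < Fintype.card X)
    (hφ : Function.Surjective φ) : KillsPrimitive φ := by
  classical
  by_cases hφ1 : ∃ x, φ (of x) = 1
  · obtain ⟨x, hx⟩ := hφ1
    exact ⟨of x, isPrimitive_of x, hx⟩
  push Not at hφ1
  have hfin : {u : FreeGroup Y | ∃ x, u.toWord <:+ (φ (of x)).toWord}.Finite := by
    rw [Set.ofPred_exists]
    refine Set.finite_iUnion fun x => ?_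
    have htails := (φ (of x)).toWord.tails.finite_toSet
    exact (htails.preimage FreeGroup.toWord_injective.injOn).subset fun u hu =>
      (List.mem_tails _ _).2 hu
  have : Nonempty X := Fintype.card_pos_iff.1 (Nat.zero_lt_of_lt hXY)
  have hT : IsSuffixClosed hfin.toFinset := by
    refine ⟨hfin.mem_toFinset.2 ⟨Classical.arbitrary X, List.nil_suffix⟩, fun u hu w hw => ?_⟩
    obtain ⟨x, hx⟩ := hfin.mem_toFinset.1 hu
    exact hfin.mem_toFinset.2 ⟨x, hw.trans hx⟩
  exact hT.killsPrimitive hXY hφ fun x => mem_edgeElements_of_suffix_mem (hφ1 x) fun u hu =>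
    hfin.mem_toFinset.2 ⟨x, hu⟩

end KillsPrimitive

end OneRelator

/-- (Whitehead) If F is free of rank n and the quotient of F by the normal closure
of μ is free of rank n − 1, then μ is a primitive element of F. -/
theorem stmt_14 (n : ℕ) (hn : 1 ≤ n) (μ : FreeGroup (Fin n))
    (h : Nonempty
      ((FreeGroup (Fin n) ⧸ Subgroup.normalClosure {μ}) ≃* FreeGroup (Fin (n - 1)))) :
    ∃ b : Fin n → FreeGroup (Fin n),
      Function.Bijective (FreeGroup.lift b) ∧ μ ∈ Set.range b := by
  obtain ⟨f⟩ := h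
  let φ := f.toMonoidHom.comp (QuotientGroup.mk' (Subgroup.normalClosure {μ}))
  have hφ : Function.Surjective φ := f.surjective.comp (QuotientGroup.mk'_surjective _)
  have hcard : Fintype.card (Fin (n - 1)) < Fintype.card (Fin n) := by
    simpa only [Fintype.card_fin] using Nat.sub_one_lt_of_lt hn
  obtain ⟨g, hg, hgφ⟩ := OneRelator.killsPrimitive_of_surjective hcard hφ
  have hgμ : g ∈ Subgroup.normalClosure {μ} :=
    (QuotientGroup.eq_one_iff g).1 (f.map_eq_one_iff.1 hgφ)
  exact (hg.of_mem_normalClosure hgμ).exists_basis
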